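/- Let p > 1, N ≥ m, and fix η > 0. Then the set of pairs (A, y) ∈ ℝ^{m×N} × ℝ^m satisfying: y is in the range of A, η < min{‖x‖_p : Ax = y}, and the problem min ‖Ax − y‖₂ subject to ‖x‖_p ≤ η has a unique optimal solution x* with |supp(x*)| < N — has Lebesgue measure zero; that is, for almost all (A, y) with y ∈ R(A) and 0 < η < min{‖x‖_p : Ax = y}, the unique optimal solution x* satisfies |supp(x*)| = N. -/

import Mathlib

/-!
Suppose an optimal `x'` has `x' i = 0`, and let `r = A x' - y`, which is nonzero because every
solution of `A x = y` lies outside the ball `‖x‖_p ≤ η`. The curve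
`t ↦ (1 - |t|^p / η^p) x' + t e_i` stays in the ball for small `t`, and as `p > 1` its velocity at
`t = 0` is `e_i`. So optimality forces `⟨A_i, r⟩ = 0`, where `A_i` is the `i`-th column of `A`
(`column_inner_residual_eq_zero`).

On the other hand, `x'` also solves the problem restricted to `{x | x i = 0}`. That problem does
not involve `A_i`, and its residual is unique, being given by a Euclidean projection onto a convex
set (`IsRestrictedOpt.residual_unique`). Hence `r` does not change when the entry `A k i` varies,
and if `r k ≠ 0` then `⟨A_i, r⟩ = 0` determines that entry. The exceptional pairs therefore lie in
countably many sets `badSet`, each of which is closed (project a closed set along a compact factor)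
and meets each line in the direction of the entry `(k, i)` in at most one point. By Fubini these
sets are null.
-/

open scoped BigOperators
open MeasureTheory

/-- The `p`-norm (quasi-norm for `0 < p < 1`) on `ℝ^N`. -/
noncomputable def pnorm {N : ℕ} (p : ℝ) (x : Fin N → ℝ) : ℝ :=
  (∑ i, |x i| ^ p) ^ (1 / p)

/-- The Euclidean norm on `ℝ^m`. -/
noncomputable def norm2 {m : ℕ} (v : Fin m → ℝ) : ℝ :=
  Real.sqrt (∑ i, v i ^ 2)

/-- Matrix-vector multiplication `A x` for `A ∈ ℝ^{m×N}`, `x ∈ ℝ^N`. -/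
def mulVec' {m N : ℕ} (A : Fin m → Fin N → ℝ) (x : Fin N → ℝ) : Fin m → ℝ :=
  fun i => ∑ j, A i j * x j

/-- The number of nonzero entries of `x ∈ ℝ^N`, i.e. `|supp(x)|`. -/
noncomputable def suppCard {N : ℕ} (x : Fin N → ℝ) : ℕ :=
  (Finset.univ.filter fun i => x i ≠ 0).card

/-- The ball `‖x‖_p ≤ η`, written without the outer `p`-th root. -/
def pBall (N : ℕ) (p η : ℝ) : Set (Fin N → ℝ) :=
  {x | ∑ i, |x i| ^ p ≤ η ^ p}

/-- `x` minimizes `‖A x - y‖₂` over the points of the `p`-ball with `i`-th coordinate zero. -/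
def IsRestrictedOpt {m N : ℕ} (p η : ℝ) (i : Fin N) (A : Fin m → Fin N → ℝ) (y : Fin m → ℝ)
    (x : Fin N → ℝ) : Prop :=
  x ∈ pBall N p η ∧ x i = 0 ∧ ∀ z ∈ pBall N p η, z i = 0 →
    ∑ k, (mulVec' A x k - y k) ^ 2 ≤ ∑ k, (mulVec' A z k - y k) ^ 2

/-- The pairs `(A, y)` for which some minimizer of the problem restricted to `x i = 0` has a
residual orthogonal to the `i`-th column of `A`. The `k`-th entry of the residual is bounded away
from zero, rather than just nonzero, so that the set is closed. -/
def badSet {m N : ℕ} (p η : ℝ) (i : Fin N) (k : Fin m) (n : ℕ) :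
    Set ((Fin m → Fin N → ℝ) × (Fin m → ℝ)) :=
  {q | ∃ x, IsRestrictedOpt p η i q.1 q.2 x ∧
    1 / ((n : ℝ) + 1) ≤ |mulVec' q.1 x k - q.2 k| ∧
    ∑ l, q.1 l i * (mulVec' q.1 x l - q.2 l) = 0}

lemma pnorm_le_iff {N : ℕ} {p η : ℝ} (hp : 1 < p) (hη : 0 < η) (x : Fin N → ℝ) :
    pnorm p x ≤ η ↔ x ∈ pBall N p η := by
  have h0 : 0 ≤ ∑ i, |x i| ^ p := Finset.sum_nonneg fun i _ => by positivity
  rw [pnorm, pBall, Set.mem_ofPred_eq, one_div]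
  exact Real.rpow_inv_le_iff_of_pos h0 hη.le (by linarith)

lemma norm2_le_iff {m : ℕ} (u v : Fin m → ℝ) :
    norm2 u ≤ norm2 v ↔ ∑ k, u k ^ 2 ≤ ∑ k, v k ^ 2 :=
  Real.sqrt_le_sqrt_iff (Finset.sum_nonneg fun _ _ => sq_nonneg _)

lemma midpoint_mem_pBall {N : ℕ} {p η : ℝ} (hp : 1 < p) {x z : Fin N → ℝ}
    (hx : x ∈ pBall N p η) (hz : z ∈ pBall N p η) :
    (fun j => (x j + z j) / 2) ∈ pBall N p η := by
  simp only [pBall, Set.mem_ofPred_eq] at *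
  have h : ∀ j, |(x j + z j) / 2| ^ p ≤ 1 / 2 * |x j| ^ p + 1 / 2 * |z j| ^ p := by
    intro j
    have h1 := (convexOn_rpow hp.le).2 (abs_nonneg (x j)) (abs_nonneg (z j))
      (show (0 : ℝ) ≤ 1 / 2 by norm_num) (show (0 : ℝ) ≤ 1 / 2 by norm_num) (by norm_num)
    simp only [smul_eq_mul] at h1
    refine le_trans (Real.rpow_le_rpow (abs_nonneg _) ?_ (by linarith)) h1
    rw [abs_div, abs_two]
    linarith [abs_add_le (x j) (z j)]
  calc _ ≤ ∑ j, (1 / 2 * |x j| ^ p + 1 / 2 * |z j| ^ p) := Finset.sum_le_sum fun j _ => h j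
    _ = 1 / 2 * ∑ j, |x j| ^ p + 1 / 2 * ∑ j, |z j| ^ p := by
      rw [Finset.sum_add_distrib, Finset.mul_sum, Finset.mul_sum]
    _ ≤ η ^ p := by linarith

/-- The residual at a minimizer is unique: the parallelogram law, applied to the residuals at two
minimizers and at their midpoint, shows that they agree. -/
lemma IsRestrictedOpt.residual_unique {m N : ℕ} {p η : ℝ} (hp : 1 < p) {i : Fin N}
    {A : Fin m → Fin N → ℝ} {y : Fin m → ℝ} {x z : Fin N → ℝ}
    (hx : IsRestrictedOpt p η i A y x) (hz : IsRestrictedOpt p η i A y z) :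
    mulVec' A x = mulVec' A z := by
  have h1 := hx.2.2 z hz.1 hz.2.1
  have h2 := hx.2.2 _ (midpoint_mem_pBall hp hx.1 hz.1) (by simp [hx.2.1, hz.2.1])
  have h3 := hz.2.2 x hx.1 hx.2.1
  have hmid : ∀ k, mulVec' A (fun j => (x j + z j) / 2) k
      = (mulVec' A x k + mulVec' A z k) / 2 := by
    intro k
    simp only [mulVec']
    rw [← Finset.sum_add_distrib, Finset.sum_div]
    exact Finset.sum_congr rfl fun j _ => by ring
  have h4 : ∑ k, (mulVec' A x k - mulVec' A z k) ^ 2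
      = 2 * ∑ k, (mulVec' A x k - y k) ^ 2 + 2 * ∑ k, (mulVec' A z k - y k) ^ 2
        - 4 * ∑ k, (mulVec' A (fun j => (x j + z j) / 2) k - y k) ^ 2 := by
    simp only [Finset.mul_sum]
    rw [← Finset.sum_add_distrib, ← Finset.sum_sub_distrib]
    exact Finset.sum_congr rfl fun k _ => by rw [hmid]; ring
  have h5 : ∑ k, (mulVec' A x k - mulVec' A z k) ^ 2 = 0 :=
    le_antisymm (by linarith) (Finset.sum_nonneg fun k _ => sq_nonneg _)
  rw [Finset.sum_eq_zero_iff_of_nonneg fun k _ => sq_nonneg _] at h5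
  funext k
  have := h5 k (Finset.mem_univ k)
  nlinarith

/-- First-order optimality at a vanishing coordinate: the constraint imposes no first-order
restriction in the direction `e_i` because `p > 1`. -/
lemma column_inner_residual_eq_zero {m N : ℕ} {p η : ℝ} (hp : 1 < p) (hη : 0 < η) {i : Fin N}
    {A : Fin m → Fin N → ℝ} {y : Fin m → ℝ} {x : Fin N → ℝ} (hx : x ∈ pBall N p η) (hi : x i = 0)
    (hopt : ∀ z ∈ pBall N p η,
      ∑ k, (mulVec' A x k - y k) ^ 2 ≤ ∑ k, (mulVec' A z k - y k) ^ 2) :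
    ∑ k, A k i * (mulVec' A x k - y k) = 0 := by
  have hηp : 0 < η ^ p := Real.rpow_pos_of_pos hη p
  have hp0 : p ≠ 0 := by linarith
  let s : ℝ → ℝ := fun t => |t| ^ p / η ^ p
  have hs0 : s 0 = 0 := by simp [s, Real.zero_rpow hp0]
  have hs : HasDerivAt s 0 0 := by
    simpa using (hasDerivAt_abs_rpow 0 hp).div_const (η ^ p)
  let c : ℝ → Fin N → ℝ := fun t j => (1 - s t) * x j + t * (if j = i then 1 else 0)
  have hmul : ∀ t k, mulVec' A (c t) k = (1 - s t) * mulVec' A x k + t * A k i := by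
    intro t k
    simp only [mulVec', c, mul_add, Finset.sum_add_distrib, Finset.mul_sum]
    congr 1
    · exact Finset.sum_congr rfl fun j _ => by ring
    · simp [mul_comm]
  have hc0 : ∀ k, mulVec' A (c 0) k = mulVec' A x k := by
    intro k; rw [hmul, hs0]; ring
  have hfeas : ∀ t, |t| ≤ η → c t ∈ pBall N p η := by
    intro t ht
    have hs1 : 0 ≤ s t := by positivity
    have hs2 : s t ≤ 1 := by
      rw [div_le_one hηp]
      exact Real.rpow_le_rpow (abs_nonneg _) ht (by linarith)
    have hpow : (1 - s t) ^ p ≤ 1 - s t := by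
      simpa using Real.rpow_le_rpow_of_exponent_ge' (by linarith : 0 ≤ 1 - s t)
        (by linarith) zero_le_one hp.le
    have hterm : ∀ j, |c t j| ^ p ≤ (1 - s t) * |x j| ^ p + (if j = i then |t| ^ p else 0) := by
      intro j
      by_cases hj : j = i
      · subst hj
        simp [c, hi, Real.zero_rpow hp0]
      · simp only [c, hj, if_false, mul_zero, add_zero]
        rw [abs_mul, Real.mul_rpow (abs_nonneg _) (abs_nonneg _),
          abs_of_nonneg (by linarith : 0 ≤ 1 - s t)]
        exact mul_le_mul_of_nonneg_right hpow (by positivity)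
    have hst : s t * η ^ p = |t| ^ p := div_mul_cancel₀ _ hηp.ne'
    simp only [pBall, Set.mem_ofPred_eq] at hx ⊢
    calc _ ≤ ∑ j, ((1 - s t) * |x j| ^ p + (if j = i then |t| ^ p else 0)) :=
          Finset.sum_le_sum fun j _ => hterm j
      _ = (1 - s t) * ∑ j, |x j| ^ p + |t| ^ p := by
          rw [Finset.sum_add_distrib, Finset.mul_sum]; simp
      _ ≤ (1 - s t) * η ^ p + |t| ^ p := by
          have := mul_le_mul_of_nonneg_left hx (by linarith : 0 ≤ 1 - s t)
          linarith
      _ = η ^ p := by rw [sub_mul, hst]; ring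
  let f : ℝ → ℝ := fun t => ∑ k, (mulVec' A (c t) k - y k) ^ 2
  have hmin : IsLocalMin f 0 := by
    filter_upwards [Metric.ball_mem_nhds (0 : ℝ) hη] with t ht
    simp only [f, hc0]
    refine hopt _ (hfeas t ?_)
    rw [Metric.mem_ball, Real.dist_0_eq_abs] at ht
    exact ht.le
  have hderiv : HasDerivAt f (∑ k, 2 * (A k i * (mulVec' A x k - y k))) 0 := by
    have hk : ∀ k ∈ (Finset.univ : Finset (Fin m)),
        HasDerivAt (fun t => (mulVec' A (c t) k - y k) ^ 2)
          (2 * (A k i * (mulVec' A x k - y k))) 0 := by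
      intro k _
      simp only [hmul]
      have h := ((((hs.const_sub 1).mul_const (mulVec' A x k)).add
        ((hasDerivAt_id (0 : ℝ)).mul_const (A k i))).sub_const (y k)).pow 2
      refine h.congr_deriv ?_
      simp [hs0]
      ring
    exact HasDerivAt.fun_sum hk
  have := hmin.hasDerivAt_eq_zero hderiv
  rw [← Finset.mul_sum] at this
  linarith

lemma isClosed_pBall {N : ℕ} {p : ℝ} (hp : 1 < p) (η : ℝ) : IsClosed (pBall N p η) := by
  refine isClosed_le (continuous_finsetSum _ fun i _ => ?_) continuous_const
  exact (continuous_apply i).abs.rpow_const fun _ => Or.inr (by linarith)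

lemma isCompact_pBall {N : ℕ} {p η : ℝ} (hp : 1 < p) (hη : 0 < η) :
    IsCompact (pBall N p η) := by
  refine Metric.isCompact_of_isClosed_isBounded (isClosed_pBall hp η) ?_
  refine (Metric.isBounded_closedBall (x := (0 : Fin N → ℝ)) (r := η)).subset fun x hx => ?_
  rw [mem_closedBall_zero_iff, pi_norm_le_iff_of_nonneg hη.le]
  intro j
  have h1 : |x j| ^ p ≤ ∑ i, |x i| ^ p :=
    Finset.single_le_sum (f := fun i => |x i| ^ p) (fun i _ => by positivity) (Finset.mem_univ j)
  exact (Real.rpow_le_rpow_iff (abs_nonneg _) hη.le (by linarith)).1 (h1.trans hx)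

lemma isClosed_badSet {m N : ℕ} {p η : ℝ} (hp : 1 < p) (hη : 0 < η) (i : Fin N) (k : Fin m)
    (n : ℕ) : IsClosed (badSet p η i k n) := by
  have : CompactSpace (pBall N p η) := isCompact_iff_compactSpace.1 (isCompact_pBall hp hη)
  let C : Set (((Fin m → Fin N → ℝ) × (Fin m → ℝ)) × (Fin N → ℝ)) :=
    {w | w.2 i = 0} ∩
    (⋂ z ∈ pBall N p η, ⋂ (_ : z i = 0),
      {w | ∑ k, (mulVec' w.1.1 w.2 k - w.1.2 k) ^ 2
        ≤ ∑ k, (mulVec' w.1.1 z k - w.1.2 k) ^ 2}) ∩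
    {w | 1 / ((n : ℝ) + 1) ≤ |mulVec' w.1.1 w.2 k - w.1.2 k|} ∩
    {w | ∑ l, w.1.1 l i * (mulVec' w.1.1 w.2 l - w.1.2 l) = 0}
  have hC : IsClosed C := by
    refine ((IsClosed.inter ?_ ?_).inter ?_).inter ?_
    · exact isClosed_eq (by fun_prop) continuous_const
    · refine isClosed_biInter fun z _ => isClosed_iInter fun _ => isClosed_le ?_ ?_
      · unfold mulVec'; fun_prop
      · unfold mulVec'; fun_prop
    · exact isClosed_le continuous_const (by unfold mulVec'; fun_prop)
    · exact isClosed_eq (by unfold mulVec'; fun_prop) continuous_const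
  have himg : badSet p η i k n = Prod.fst ''
      (Prod.map id ((↑) : pBall N p η → Fin N → ℝ) ⁻¹' C) := by
    ext q
    constructor
    · rintro ⟨x, ⟨hx, hi, hopt⟩, hk, hl⟩
      exact ⟨(q, ⟨x, hx⟩), ⟨⟨⟨hi, by simpa using hopt⟩, hk⟩, hl⟩, rfl⟩
    · rintro ⟨⟨q, x, hx⟩, ⟨⟨⟨hi, hopt⟩, hk⟩, hl⟩, rfl⟩
      exact ⟨x, ⟨hx, hi, by simpa using hopt⟩, hk, hl⟩
  rw [himg]
  exact isClosedMap_fst_of_compactSpace _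
    (hC.preimage (continuous_id.prodMap continuous_subtype_val))

/-- The direction in the space of pairs `(A, y)` that changes only the entry `A k i`. -/
def entryDir {m N : ℕ} (i : Fin N) (k : Fin m) : (Fin m → Fin N → ℝ) × (Fin m → ℝ) :=
  (Pi.single k (Pi.single i 1), 0)

lemma mulVec'_add_smul_entryDir {m N : ℕ} (i : Fin N) (k : Fin m)
    (q : (Fin m → Fin N → ℝ) × (Fin m → ℝ)) (t : ℝ) {x : Fin N → ℝ} (hx : x i = 0) :
    mulVec' (q + t • entryDir i k).1 x = mulVec' q.1 x := by
  funext l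
  refine Finset.sum_congr rfl fun j _ => ?_
  by_cases hj : j = i
  · subst hj; simp [hx]
  · by_cases hl : l = k
    · subst hl; simp [entryDir, hj]
    · simp [entryDir, hl]

/-- Each line in the direction of the entry `(k, i)` meets `badSet` in at most one point. -/
lemma badSet_line_subsingleton {m N : ℕ} {p η : ℝ} (hp : 1 < p) (i : Fin N) (k : Fin m) (n : ℕ)
    (q : (Fin m → Fin N → ℝ) × (Fin m → ℝ)) :
    {t : ℝ | q + t • entryDir i k ∈ badSet p η i k n}.Subsingleton := by
  have hy : ∀ t : ℝ, (q + t • entryDir i k).2 = q.2 := fun t => by simp [entryDir]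
  -- At each parameter, the witness is a minimizer for the base point `q` as well.
  have key : ∀ t : ℝ, q + t • entryDir i k ∈ badSet p η i k n →
      ∃ x, IsRestrictedOpt p η i q.1 q.2 x ∧ mulVec' q.1 x k - q.2 k ≠ 0 ∧
        ∑ l, q.1 l i * (mulVec' q.1 x l - q.2 l) + t * (mulVec' q.1 x k - q.2 k) = 0 := by
    rintro t ⟨x, ⟨hx, hi, hopt⟩, hk, hl⟩
    rw [hy] at hopt hk hl
    rw [mulVec'_add_smul_entryDir i k q t hi] at hopt hk hl
    refine ⟨x, ⟨hx, hi, fun z hz hzi => ?_⟩, ?_, ?_⟩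
    · have := hopt z hz hzi
      rwa [mulVec'_add_smul_entryDir i k q t hzi] at this
    · exact abs_pos.1 (lt_of_lt_of_le (by positivity) hk)
    · rw [← hl]
      have hent : ∀ l, (q + t • entryDir i k).1 l i = q.1 l i + (if l = k then t else 0) := by
        intro l
        by_cases h : l = k
        · subst h; simp [entryDir]
        · simp [entryDir, h]
      simp [hent, add_mul, Finset.sum_add_distrib]
  intro t ht t' ht'
  obtain ⟨x, hx, hne, hl⟩ := key t ht
  obtain ⟨x', hx', -, hl'⟩ := key t' ht'
  rw [hx'.residual_unique hp hx] at hl'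
  exact mul_right_cancel₀ hne (by linarith)

lemma volume_badSet {m N : ℕ} {p η : ℝ} (hp : 1 < p) (hη : 0 < η) (i : Fin N) (k : Fin m)
    (n : ℕ) : volume (badSet p η i k n) = 0 := by
  have hae : ∀ᵐ q ∂(volume : Measure ((Fin m → Fin N → ℝ) × (Fin m → ℝ))),
      q ∈ (badSet p η i k n)ᶜ := by
    have : (volume : Measure ((Fin m → Fin N → ℝ) × (Fin m → ℝ))).IsAddHaarMeasure := by
      have h1 : (volume : Measure (Fin m → Fin N → ℝ)).IsAddHaarMeasure :=
        Measure.pi.isAddHaarMeasure _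
      exact Measure.prod.instIsAddHaarMeasure _ _
    refine ae_mem_of_ae_add_linearMap_mem (LinearMap.toSpanSingleton ℝ _ (entryDir i k))
      (volume : Measure ℝ) volume (isClosed_badSet hp hη i k n).measurableSet.compl fun q => ?_
    rw [ae_iff]
    simpa using (badSet_line_subsingleton hp i k n q).measure_zero volume
  simpa [ae_iff] using hae

/-- Least sparsity of the second form of generalized basis pursuit denoising for `p > 1`,
`N ≥ m`, `η > 0`: for almost all `(A, y) ∈ ℝ^{m×N} × ℝ^m` such that `y ∈ R(A)` and
`η < min{‖x‖_p : Ax = y}`, any optimal solution of `min ‖Ax − y‖₂ s.t. ‖x‖_p ≤ η` has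
full support. -/
theorem BPDN2_least_sparsity {m N : ℕ} (hmN : m ≤ N) (p : ℝ) (hp : 1 < p)
    (η : ℝ) (hη : 0 < η) :
    ∃ E : Set ((Fin m → Fin N → ℝ) × (Fin m → ℝ)), volume E = 0 ∧
      ∀ A y, (A, y) ∉ E →
        (∃ x, mulVec' A x = y) →
        (∀ x, mulVec' A x = y → η < pnorm p x) →
        ∀ x' : Fin N → ℝ,
          (pnorm p x' ≤ η ∧
            ∀ x, pnorm p x ≤ η → norm2 (mulVec' A x' - y) ≤ norm2 (mulVec' A x - y)) →
          suppCard x' = N := by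
  refine ⟨⋃ (i : Fin N) (k : Fin m) (n : ℕ), badSet p η i k n, ?_, ?_⟩
  · simp only [measure_iUnion_null_iff]
    exact fun i k n => volume_badSet hp hη i k n
  intro A y hE _ hη' x' ⟨hx', hopt⟩
  have hball := (pnorm_le_iff hp hη x').1 hx'
  have hopt' : ∀ z ∈ pBall N p η,
      ∑ k, (mulVec' A x' k - y k) ^ 2 ≤ ∑ k, (mulVec' A z k - y k) ^ 2 := fun z hz =>
    (norm2_le_iff _ _).1 (hopt z ((pnorm_le_iff hp hη z).2 hz))
  have hfull : ∀ i, x' i ≠ 0 := by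
    intro i hi
    have hne : mulVec' A x' ≠ y := fun h => (hη' x' h).not_ge hx'
    obtain ⟨k, hk⟩ := Function.ne_iff.1 hne
    obtain ⟨n, hn⟩ := exists_nat_one_div_lt (abs_pos.2 (sub_ne_zero.2 hk))
    refine hE (Set.mem_iUnion.2 ⟨i, Set.mem_iUnion.2 ⟨k, Set.mem_iUnion.2 ⟨n, x', ?_, hn.le, ?_⟩⟩⟩)
    · exact ⟨hball, hi, fun z hz _ => hopt' z hz⟩
    · exact column_inner_residual_eq_zero hp hη hball hi hopt'
  simp [suppCard, hfull]
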